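/- arXiv:2403.00518 — 5 statements merged into one kernel-verified Lean document; each statement's English description precedes it below -/
import Mathlib

section
/- Let K be a field of characteristic zero and F ⊆ K a subfield. Let q : F → K be a quadratic function satisfying q(xy) = q(x)y² + x²q(y) for all nonzero x, y ∈ F. Then there exists a second-order derivation d : F → K such that q(x) = 4x·d(x) − d(x²) for all x ∈ F. -/
/-- `B : F → F → K` is symmetric and additive in each variable. -/
def IsSymmBiadditive {K : Type*} [Field K] (F : Subfield K) (B : F → F → K) : Prop :=
  (∀ x y : F, B x y = B y x) ∧
  (∀ x y z : F, B (x + y) z = B x z + B y z) ∧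
  (∀ x y z : F, B x (y + z) = B x y + B x z)

/-- `q : F → K` is a quadratic function: the trace of a symmetric bi-additive map. -/
def IsQuadratic {K : Type*} [Field K] (F : Subfield K) (q : F → K) : Prop :=
  ∃ B : F → F → K, IsSymmBiadditive F B ∧ ∀ x : F, q x = B x x

/-- `d : F → K` is a second-order derivation: `d` is additive and there is a map
`B` with `d(xy) - x d(y) - d(x) y = B(x,y)` which is a derivation (additive and
Leibniz) in each variable. -/
def IsSecondOrderDerivation {K : Type*} [Field K] (F : Subfield K) (d : F → K) : Prop :=
  (∀ x y : F, d (x + y) = d x + d y) ∧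
  ∃ B : F → F → K,
    (∀ x y : F, d (x * y) - (x : K) * d y - d x * (y : K) = B x y) ∧
    (∀ y u v : F, B (u + v) y = B u y + B v y) ∧
    (∀ y u v : F, B (u * v) y = (u : K) * B v y + (v : K) * B u y) ∧
    (∀ x u v : F, B x (u + v) = B x u + B x v) ∧
    (∀ x u v : F, B x (u * v) = (u : K) * B x v + (v : K) * B x u)

/-!
Let `B` be a symmetric bi-additive map whose diagonal `q` satisfies `q (x * y) = y² q x + x² q y`,
and put `d x = B x 1`. Polarizing this identity in `x` along `1`, and then in `y`, gives
`B (x * y) z + B (x * z) y = 2 y z (d x) + 2 x (B y z)`, and `z = 1` turns it into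
`B x y = 2 (x (d y) + y (d x)) - d (x * y)`. In terms of the Leibniz defect
`δ x y = d (x * y) - x (d y) - y (d x)` the polarized identity reads
`δ (x * y) z + δ (x * z) y = z (δ x y) + y (δ x z) + 2 x (δ y z)`. Associativity makes `δ` a
cocycle, `δ (x * y) z + z (δ x y) = δ (x * z) y + y (δ x z)`, and adding the two yields twice the
Leibniz rule for `δ`.
-/

section LeibnizDefect

variable {R M : Type*} [CommRing R] [AddCommGroup M] [Module R M]

/-- The failure of an additive map `d` on a commutative ring to satisfy the Leibniz rule, as a
bi-additive map. -/
def leibnizDefect (d : R →+ M) : R →+ R →+ M :=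
  AddMonoidHom.mk'
    (fun x => AddMonoidHom.mk' (fun y => d (x * y) - x • d y - y • d x) fun y z => by
      simp only [mul_add, map_add]
      module)
    fun x y => by
      ext z
      simp only [AddMonoidHom.mk'_apply, AddMonoidHom.add_apply, add_mul, map_add]
      module

lemma leibnizDefect_apply (d : R →+ M) (x y : R) :
    leibnizDefect d x y = d (x * y) - x • d y - y • d x :=
  rfl

lemma leibnizDefect_comm (d : R →+ M) (x y : R) :
    leibnizDefect d x y = leibnizDefect d y x := by
  rw [leibnizDefect_apply, leibnizDefect_apply, mul_comm, sub_right_comm]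

lemma leibnizDefect_cocycle (d : R →+ M) (x y z : R) :
    leibnizDefect d (x * y) z + z • leibnizDefect d x y =
      leibnizDefect d (x * z) y + y • leibnizDefect d x z := by
  simp only [leibnizDefect_apply, mul_right_comm x z y]
  module

/-- An additive map from a commutative ring to a module is a second-order derivation if its
Leibniz defect is a derivation in each variable; as the defect is symmetric and bi-additive, this
amounts to the Leibniz rule in the first variable. For maps from a subfield, see
`IsSecondOrderDerivationHom.isSecondOrderDerivation`. -/
def IsSecondOrderDerivationHom (d : R →+ M) : Prop :=
  ∀ u v y : R, leibnizDefect d (u * v) y = u • leibnizDefect d v y + v • leibnizDefect d u y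

end LeibnizDefect

/-- `B` is symmetric and its diagonal `q x = B x x` satisfies the quadratic Leibniz rule
`q (x * y) = y² q x + x² q y`. -/
structure IsQuadraticLeibniz {R M : Type*} [CommRing R] [AddCommGroup M] [Module R M]
    (B : R →+ R →+ M) : Prop where
  symm (x y : R) : B x y = B y x
  mul_self (x y : R) : B (x * y) (x * y) = y ^ 2 • B x x + x ^ 2 • B y y

namespace IsQuadraticLeibniz

variable {R M : Type*} [CommRing R] [AddCommGroup M] [Module R M] {B : R →+ R →+ M}

lemma of_ne_zero (hsymm : ∀ x y, B x y = B y x)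
    (hmul : ∀ x y, x ≠ 0 → y ≠ 0 → B (x * y) (x * y) = y ^ 2 • B x x + x ^ 2 • B y y) :
    IsQuadraticLeibniz B where
  symm := hsymm
  mul_self x y := by
    rcases eq_or_ne x 0 with rfl | hx
    · simp
    rcases eq_or_ne y 0 with rfl | hy
    · simp
    exact hmul x y hx hy

lemma one_one (hB : IsQuadraticLeibniz B) : B 1 1 = 0 := by
  simpa using hB.mul_self 1 1

lemma mul_left_self (hB : IsQuadraticLeibniz B) (h2 : IsSMulRegular M (2 : R)) (x y : R) :
    B (x * y) y = y ^ 2 • B x 1 + x • B y y := by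
  have h := hB.mul_self (x + 1) y
  simp only [add_mul, one_mul, map_add, AddMonoidHom.add_apply, hB.symm y (x * y), hB.symm 1 x,
    hB.one_one, hB.mul_self x y] at h
  apply h2
  linear_combination (norm := module) h

lemma mul_left_add_mul_left (hB : IsQuadraticLeibniz B) (h2 : IsSMulRegular M (2 : R))
    (x y z : R) :
    B (x * y) z + B (x * z) y = (2 * y * z) • B x 1 + (2 * x) • B y z := by
  have h := hB.mul_left_self h2 x (y + z)
  simp only [mul_add, map_add, AddMonoidHom.add_apply, hB.symm z y] at h
  linear_combination (norm := module) h - hB.mul_left_self h2 x y - hB.mul_left_self h2 x z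

lemma apply_eq_sub_apply_mul_one (hB : IsQuadraticLeibniz B) (h2 : IsSMulRegular M (2 : R))
    (x y : R) :
    B x y = (2 * x) • B y 1 + (2 * y) • B x 1 - B (x * y) 1 := by
  have h := hB.mul_left_add_mul_left h2 x y 1
  simp only [mul_one] at h
  linear_combination (norm := module) h

lemma leibnizDefect_mul_left_add_mul_left (hB : IsQuadraticLeibniz B)
    (h2 : IsSMulRegular M (2 : R)) (x y z : R) :
    leibnizDefect (B.flip 1) (x * y) z + leibnizDefect (B.flip 1) (x * z) y =
      z • leibnizDefect (B.flip 1) x y + y • leibnizDefect (B.flip 1) x z +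
        (2 * x) • leibnizDefect (B.flip 1) y z := by
  have h := hB.mul_left_add_mul_left h2 x y z
  rw [hB.apply_eq_sub_apply_mul_one h2 (x * y) z, hB.apply_eq_sub_apply_mul_one h2 (x * z) y,
    hB.apply_eq_sub_apply_mul_one h2 y z] at h
  simp only [leibnizDefect_apply, AddMonoidHom.flip_apply]
  linear_combination (norm := module) -h

lemma isSecondOrderDerivationHom_flip_one (hB : IsQuadraticLeibniz B)
    (h2 : IsSMulRegular M (2 : R)) : IsSecondOrderDerivationHom (B.flip 1) := by
  intro x y z
  apply h2
  linear_combination (norm := module)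
    hB.leibnizDefect_mul_left_add_mul_left h2 x y z + leibnizDefect_cocycle (B.flip 1) x y z

end IsQuadraticLeibniz

theorem stmt_1_general {R M : Type*} [CommRing R] [AddCommGroup M] [Module R M]
    (h2 : IsSMulRegular M (2 : R)) {B : R →+ R →+ M} (hB : IsQuadraticLeibniz B) :
    ∃ d : R →+ M, IsSecondOrderDerivationHom d ∧ ∀ x, B x x = (4 * x) • d x - d (x ^ 2) := by
  refine ⟨B.flip 1, hB.isSecondOrderDerivationHom_flip_one h2, fun x => ?_⟩
  rw [hB.apply_eq_sub_apply_mul_one h2 x x, AddMonoidHom.flip_apply, AddMonoidHom.flip_apply, sq]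
  module

section Subfield

variable {K : Type*} [Field K] {F : Subfield K}

lemma IsQuadratic.exists_addMonoidHom {q : F → K} (hq : IsQuadratic F q) :
    ∃ B : F →+ F →+ K, (∀ x y, B x y = B y x) ∧ ∀ x, q x = B x x := by
  obtain ⟨B, ⟨hsymm, hadd_left, hadd_right⟩, hqB⟩ := hq
  exact ⟨AddMonoidHom.mk' (fun x => AddMonoidHom.mk' (B x) (hadd_right x)) fun x y =>
    AddMonoidHom.ext (hadd_left x y), hsymm, hqB⟩

lemma IsSecondOrderDerivationHom.isSecondOrderDerivation {d : F →+ K}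
    (hd : IsSecondOrderDerivationHom d) : IsSecondOrderDerivation F d := by
  refine ⟨map_add d, fun x y => leibnizDefect d x y, fun x y => ?_,
    fun y u v => DFunLike.congr_fun (map_add (leibnizDefect d) u v) y,
    fun y u v => hd u v y, fun x u v => map_add _ u v, fun x u v => ?_⟩
  · rw [mul_comm (d x)]
    rfl
  · simpa only [leibnizDefect_comm d x, Subfield.smul_def, smul_eq_mul] using hd u v x

end Subfield

theorem stmt_1 {K : Type*} [Field K] [CharZero K] (F : Subfield K)
    (q : F → K) (hq : IsQuadratic F q)
    (heq : ∀ x y : F, x ≠ 0 → y ≠ 0 →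
      q (x * y) = q x * (y : K) ^ 2 + (x : K) ^ 2 * q y) :
    ∃ d : F → K, IsSecondOrderDerivation F d ∧
      ∀ x : F, q x = 4 * (x : K) * d x - d (x ^ 2) := by
  obtain ⟨B, hsymm, hqB⟩ := hq.exists_addMonoidHom
  have hB : IsQuadraticLeibniz B := .of_ne_zero hsymm fun x y hx hy => by
    rw [← hqB, ← hqB, ← hqB, heq x y hx hy, mul_comm (q x)]
    rfl
  have h2 : IsSMulRegular K (2 : F) := .of_ne_zero two_ne_zero
  obtain ⟨d, hd, hBd⟩ := stmt_1_general h2 hB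
  exact ⟨d, hd.isSecondOrderDerivation, fun x => (hqB x).trans (hBd x)⟩
end

section
/- Let K be a field of characteristic zero and F ⊆ K a subfield. Let B : F × F → K be a symmetric bi-additive map such that q(x) = B(x,x) satisfies q(xy) = q(x)q(y) for all nonzero x, y ∈ F, and suppose q(1) = 1. Define the additive function a : F → K by a(x) = B(x,1). Then B(x,y) = 2a(x)a(y) − a(xy) for all x, y ∈ F, hence q(x) = 2a(x)² − a(x²) for all x ∈ F, and a(1) = 1. -/
/-!
Polarize the identity `B (x * y) (x * y) = B x x * B y y` in each factor. Polarizing in `x` and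
cancelling `2` gives `B (x * y) (z * y) = B x z * B y y`, and polarizing this in `y` gives
`B (x * y) (z * w) + B (x * w) (z * y) = B x z * B y w + B x z * B w y`.
The theorem is the case `z = w = 1`.
-/

section Polarization

variable {M A : Type*} [AddZeroClass M] [AddCommGroup A] {C D : M →+ M →+ A}

theorem biadditive_add_swap (C : M →+ M →+ A) (x y : M) :
    C x y + C y x = C (x + y) (x + y) - C x x - C y y := by
  simp only [map_add, AddMonoidHom.add_apply]
  abel

theorem biadditive_add_swap_eq_of_diag_eq (hdiag : ∀ x, C x x = D x x) (x y : M) :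
    C x y + C y x = D x y + D y x := by
  simp only [biadditive_add_swap, hdiag]

theorem symm_biadditive_ext_diag (h2 : IsSMulRegular A 2)
    (hC : ∀ x y, C x y = C y x) (hD : ∀ x y, D x y = D y x)
    (hdiag : ∀ x, C x x = D x x) : C = D := by
  ext x y
  apply h2
  calc 2 • C x y = C x y + C y x := by rw [two_nsmul, hC y x]
    _ = D x y + D y x := biadditive_add_swap_eq_of_diag_eq hdiag x y
    _ = 2 • D x y := by rw [two_nsmul, hD y x]

end Polarization

section MultiplicativeDiagonal

variable {R K : Type*} [NonUnitalNonAssocSemiring R] [NonUnitalNonAssocRing K]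
  {B : R →+ R →+ K}

theorem diag_mul_of_diag_mul_of_ne_zero
    (hmul : ∀ x y, x ≠ 0 → y ≠ 0 → B (x * y) (x * y) = B x x * B y y) (x y : R) :
    B (x * y) (x * y) = B x x * B y y := by
  rcases eq_or_ne x 0 with rfl | hx
  · simp
  rcases eq_or_ne y 0 with rfl | hy
  · simp
  exact hmul x y hx hy

theorem biadditive_mul_right_mul_right (h2 : IsSMulRegular K 2) (hsymm : ∀ x y, B x y = B y x)
    (hmul : ∀ x y, B (x * y) (x * y) = B x x * B y y) (x z y : R) :
    B (x * y) (z * y) = B x z * B y y := by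
  let C : R →+ R →+ K := (B.comp (AddMonoidHom.mulRight y)).compl₂ (AddMonoidHom.mulRight y)
  let D : R →+ R →+ K := B.compr₂ (AddMonoidHom.mulRight (B y y))
  have hCD : C = D := symm_biadditive_ext_diag h2
    (fun u v => hsymm (u * y) (v * y))
    (fun u v => congrArg (· * B y y) (hsymm u v))
    (fun u => hmul u y)
  exact DFunLike.congr_fun (DFunLike.congr_fun hCD x) z

theorem biadditive_mul_mul_add_swap (h2 : IsSMulRegular K 2) (hsymm : ∀ x y, B x y = B y x)
    (hmul : ∀ x y, B (x * y) (x * y) = B x x * B y y) (x z y w : R) :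
    B (x * y) (z * w) + B (x * w) (z * y) = B x z * B y w + B x z * B w y :=
  biadditive_add_swap_eq_of_diag_eq
    (C := (B.comp (AddMonoidHom.mulLeft x)).compl₂ (AddMonoidHom.mulLeft z))
    (D := B.compr₂ (AddMonoidHom.mulLeft (B x z)))
    (biadditive_mul_right_mul_right h2 hsymm hmul x z) y w

end MultiplicativeDiagonal

theorem stmt_9_general {R K : Type*} [NonAssocSemiring R] [NonAssocRing K]
    (h2 : IsSMulRegular K 2) (B : R →+ R →+ K) (hsymm : ∀ x y, B x y = B y x)
    (hmul : ∀ x y, x ≠ 0 → y ≠ 0 → B (x * y) (x * y) = B x x * B y y) (x y : R) :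
    B x y = 2 * B x 1 * B y 1 - B (x * y) 1 := by
  have hpolar : B (x * y) 1 + B x y = B x 1 * B y 1 + B x 1 * B y 1 := by
    simpa only [mul_one, one_mul, hsymm 1 y] using
      biadditive_mul_mul_add_swap h2 hsymm (diag_mul_of_diag_mul_of_ne_zero hmul) x 1 y 1
  rw [two_mul, add_mul, ← hpolar, add_sub_cancel_left]

/-- A symmetric bi-additive map as a homomorphism to the group of homomorphisms, the encoding of
biadditive maps used by `stmt_9_general`. -/
def IsSymmBiadditive.toAddMonoidHom {K : Type*} [Field K] {F : Subfield K} {B : F → F → K}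
    (hB : IsSymmBiadditive F B) : F →+ F →+ K :=
  AddMonoidHom.mk' (fun x => AddMonoidHom.mk' (B x) (hB.2.2 x))
    fun x y => AddMonoidHom.ext (hB.2.1 x y)

theorem stmt_9 {K : Type*} [Field K] [CharZero K] (F : Subfield K)
    (B : F → F → K) (hB : IsSymmBiadditive F B)
    (q : F → K) (hq : ∀ x : F, q x = B x x)
    (hmult : ∀ x y : F, x ≠ 0 → y ≠ 0 → q (x * y) = q x * q y)
    (hone : q 1 = 1)
    (a : F → K) (ha : ∀ x : F, a x = B x 1) :
    (∀ x y : F, B x y = 2 * a x * a y - a (x * y)) ∧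
    (∀ x : F, q x = 2 * a x ^ 2 - a (x ^ 2)) ∧
    a 1 = 1 := by
  obtain rfl : q = fun x => B x x := funext hq
  obtain rfl : a = fun x => B x 1 := funext ha
  have hB_eq : ∀ x y, B x y = 2 * B x 1 * B y 1 - B (x * y) 1 :=
    stmt_9_general (nsmul_right_injective two_ne_zero) hB.toAddMonoidHom hB.1 hmult
  exact ⟨hB_eq, fun x => by simpa only [sq, mul_assoc] using hB_eq x x, hone⟩
end

section
/- Let K be a field of characteristic zero and F ⊆ K a subfield. Let B : F × F → K be a symmetric bi-additive map such that q(x) = B(x,x) satisfies q(xy) = q(x)q(y) for all nonzero x, y ∈ F and q(1) = 1, and let a(x) = B(x,1). Then the additive function a satisfies −a(xyz) + a(x)a(yz) + a(y)a(xz) + (a(xy) − 2a(x)a(y))a(z) = 0 for all x, y, z ∈ F; consequently, for each fixed z ∈ F the additive function A_z(x) := a(xz) − a(x)a(z) satisfies A_z(xy) = a(x)A_z(y) + A_z(x)a(y) for all x, y ∈ F. -/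
/-! If `q` is a multiplicative quadratic map with polar form `P`, polarizing `q (x y) = q x * q y`
in both variables gives `P (x y, x' y') + P (x y', x' y) = P (x, x') * P (y, y')`. Setting
variables equal to `1` expresses `P` through the trace `t x = P (x, 1)`, namely
`P (x, y) = t x * t y - t (x y)`, and substituting this back turns the polarized identity into a
cubic identity for `t`. If `q x = B (x, x)` with `B` symmetric, then `t x = 2 B (x, 1)`. -/

open QuadraticMap (polar)

theorem polar_mul_mul_of_map_mul {R S : Type*} [NonUnitalNonAssocRing R]
    [NonUnitalNonAssocRing S] {f : R → S} (hf : ∀ x y, f (x * y) = f x * f y) (x y y' : R) :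
    polar f (x * y) (x * y') = f x * polar f y y' := by
  simp only [polar, ← mul_add, hf, mul_sub]

theorem map_mul_of_forall_ne_zero {R S : Type*} [MulZeroClass R] [MulZeroClass S] {f : R → S}
    (hzero : f 0 = 0) (hf : ∀ x y, x ≠ 0 → y ≠ 0 → f (x * y) = f x * f y) (x y : R) :
    f (x * y) = f x * f y := by
  rcases eq_or_ne x 0 with rfl | hx
  · rw [zero_mul, hzero, zero_mul]
  rcases eq_or_ne y 0 with rfl | hy
  · rw [mul_zero, hzero, mul_zero]
  exact hf x y hx hy

section Polarization

variable {A R S : Type*} [CommRing A] [CommRing S] [Module A S]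

theorem polar_mul_mul_add_polar_mul_mul [NonUnitalNonAssocRing R] [Module A R]
    {q : QuadraticMap A R S} (hq : ∀ x y, q (x * y) = q x * q y) (x x' y y' : R) :
    polar q (x * y) (x' * y') + polar q (x * y') (x' * y) = polar q x x' * polar q y y' := by
  have h := polar_mul_mul_of_map_mul hq (x + x') y y'
  simp only [add_mul, QuadraticMap.polar_add_left, QuadraticMap.polar_add_right,
    polar_mul_mul_of_map_mul hq, QuadraticMap.map_add q x x'] at h
  rw [QuadraticMap.polar_comm q (x' * y) (x * y')] at h
  linear_combination h

theorem polar_eq_polar_one_mul_polar_one_sub [NonAssocRing R] [Module A R]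
    {q : QuadraticMap A R S} (hq : ∀ x y, q (x * y) = q x * q y) (x y : R) :
    polar q x y = polar q x 1 * polar q y 1 - polar q (x * y) 1 := by
  have h := polar_mul_mul_add_polar_mul_mul hq x 1 y 1
  simp only [mul_one, one_mul] at h
  linear_combination h

theorem two_mul_polar_mul_mul_one [CommRing R] [Module A R]
    {q : QuadraticMap A R S} (hq : ∀ x y, q (x * y) = q x * q y) (x y z : R) :
    2 * polar q (x * y * z) 1 =
      polar q x 1 * polar q (y * z) 1 + polar q y 1 * polar q (x * z) 1 +
        polar q (x * y) 1 * polar q z 1 - polar q x 1 * polar q y 1 * polar q z 1 := by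
  have h := polar_mul_mul_add_polar_mul_mul hq x z y 1
  simp only [mul_one, polar_eq_polar_one_mul_polar_one_sub hq (x * y) z,
    polar_eq_polar_one_mul_polar_one_sub hq x (z * y),
    polar_eq_polar_one_mul_polar_one_sub hq x z] at h
  rw [← mul_assoc, mul_right_comm x z y, mul_comm z y] at h
  linear_combination -h

end Polarization

theorem stmt_10_general {A R S : Type*} [CommRing A] [CommRing R] [Module A R] [CommRing S]
    [Module A S] (htwo : IsLeftRegular (2 : S)) (B : LinearMap.BilinMap A R S)
    (hB : ∀ x y, B x y = B y x) (q : R → S) (hq : ∀ x, q x = B x x)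
    (hmult : ∀ x y, x ≠ 0 → y ≠ 0 → q (x * y) = q x * q y)
    (a : R → S) (ha : ∀ x, a x = B x 1) :
    (∀ x y z,
      -a (x * y * z) + a x * a (y * z) + a y * a (x * z) +
        (a (x * y) - 2 * a x * a y) * a z = 0) ∧
    (∀ z x y,
      (a (x * y * z) - a (x * y) * a z) =
        a x * (a (y * z) - a y * a z) + (a (x * z) - a x * a z) * a y) := by
  obtain rfl : q = B.toQuadraticMap := funext hq
  have polar_one (x : R) : polar B.toQuadraticMap x 1 = 2 * a x := by
    rw [LinearMap.BilinMap.polar_toQuadraticMap, hB 1 x, ha, two_mul]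
  have cubic (x y z : R) : -a (x * y * z) + a x * a (y * z) + a y * a (x * z) +
      (a (x * y) - 2 * a x * a y) * a z = 0 := by
    have h := two_mul_polar_mul_mul_one (map_mul_of_forall_ne_zero (map_zero _) hmult) x y z
    simp only [polar_one] at h
    refine htwo (htwo ?_)
    linear_combination -h
  exact ⟨cubic, fun z x y ↦ by linear_combination -cubic x y z⟩

/-- A symmetric biadditive map bundled as a `ℤ`-bilinear map, so that its diagonal is a Mathlib
`QuadraticMap`. -/
def IsSymmBiadditive.toBilinMap {K : Type*} [Field K] {F : Subfield K} {B : F → F → K}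
    (hB : IsSymmBiadditive F B) : LinearMap.BilinMap ℤ F K :=
  (AddMonoidHom.mk' (fun x ↦ (AddMonoidHom.mk' (B x) (hB.2.2 x)).toIntLinearMap)
    fun x y ↦ LinearMap.ext (hB.2.1 x y)).toIntLinearMap

theorem stmt_10 {K : Type*} [Field K] [CharZero K] (F : Subfield K)
    (B : F → F → K) (hB : IsSymmBiadditive F B)
    (q : F → K) (hq : ∀ x : F, q x = B x x)
    (hmult : ∀ x y : F, x ≠ 0 → y ≠ 0 → q (x * y) = q x * q y)
    (hone : q 1 = 1)
    (a : F → K) (ha : ∀ x : F, a x = B x 1) :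
    (∀ x y z : F,
      -a (x * y * z) + a x * a (y * z) + a y * a (x * z) +
        (a (x * y) - 2 * a x * a y) * a z = 0) ∧
    (∀ z x y : F,
      (a (x * y * z) - a (x * y) * a z) =
        a x * (a (y * z) - a y * a z) + (a (x * z) - a x * a z) * a y) :=
  stmt_10_general (mul_right_injective₀ two_ne_zero) hB.toBilinMap hB.1 q hq hmult a ha
end

section
/- Let K be a field of characteristic zero and F ⊆ K a subfield. Let B : F × F → K be a symmetric bi-additive map such that q(x) = B(x,x) satisfies q(xy) = q(x)y² + x²q(y) for all nonzero x, y ∈ F, and let a(x) = B(x,1). Then the additive function a satisfies a(x⁴) − 6x²·a(x²) + 8x³·a(x) = 0 for all x ∈ F. -/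
/-!
Write `P x` for the polar form `q (x + 1) - q x - q 1`. Evaluating `q` at
`x ^ 2 - 1 = (x + 1) * (x - 1)` in two ways expresses `P (x ^ 2)` through `P x` and `q x`. The same
formula at `x ^ 2`, together with `q (x ^ 2) = 2 * x ^ 2 * q x`, expresses `P (x ^ 4)`, and
eliminating `q x` leaves a relation between `P (x ^ 4)`, `P (x ^ 2)` and `P x`. For `q x = B x x`
one has `P x = 2 * B x 1`.
-/

open QuadraticMap (polar)

/-- The product rule `q (x * y) = y ^ 2 • q x + x ^ 2 • q y`, the analogue for quadratic maps of
the Leibniz rule for derivations. It is required for all `x` and `y`, zero included. -/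
def IsSquareLeibniz {A M : Type*} [CommRing A] [AddCommGroup M] [Module A M] (q : A → M) : Prop :=
  ∀ x y : A, q (x * y) = y ^ 2 • q x + x ^ 2 • q y

namespace IsSquareLeibniz

variable {A M : Type*} [CommRing A] [AddCommGroup M] [Module A M]

section Function

variable {q : A → M}

theorem of_ne_zero (map_zero : q 0 = 0)
    (hq : ∀ x y : A, x ≠ 0 → y ≠ 0 → q (x * y) = y ^ 2 • q x + x ^ 2 • q y) :
    IsSquareLeibniz q := by
  intro x y
  rcases eq_or_ne x 0 with rfl | hx
  · simp [map_zero]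
  rcases eq_or_ne y 0 with rfl | hy
  · simp [map_zero]
  exact hq x y hx hy

theorem map_one (hq : IsSquareLeibniz q) : q 1 = 0 := by
  simpa using hq 1 1

theorem map_sq (hq : IsSquareLeibniz q) (x : A) : q (x ^ 2) = 2 • x ^ 2 • q x := by
  rw [sq, hq, two_nsmul, sq]

end Function

variable {R : Type*} [CommRing R] [Module R A] [Module R M] {Q : QuadraticMap R A M}

theorem map_add_one (hQ : IsSquareLeibniz Q) (x : A) : Q (x + 1) = Q x + polar Q x 1 := by
  rw [QuadraticMap.map_add Q, hQ.map_one, add_zero]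

theorem map_sub_one (hQ : IsSquareLeibniz Q) (x : A) : Q (x - 1) = Q x - polar Q x 1 := by
  rw [sub_eq_add_neg, QuadraticMap.map_add Q, Q.map_neg, Q.polar_neg_right, hQ.map_one, add_zero,
    ← sub_eq_add_neg]

theorem polar_sq_one (hQ : IsSquareLeibniz Q) (x : A) :
    polar Q (x ^ 2) 1 = 4 • x • polar Q x 1 - 2 • Q x := by
  have two_evaluations : 2 • x ^ 2 • Q x - polar Q (x ^ 2) 1 =
      (x - 1) ^ 2 • (Q x + polar Q x 1) + (x + 1) ^ 2 • (Q x - polar Q x 1) :=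
    calc 2 • x ^ 2 • Q x - polar Q (x ^ 2) 1 = Q (x ^ 2 - 1) := by
          rw [hQ.map_sub_one, hQ.map_sq]
      _ = Q ((x + 1) * (x - 1)) := by ring_nf
      _ = (x - 1) ^ 2 • (Q x + polar Q x 1) + (x + 1) ^ 2 • (Q x - polar Q x 1) := by
          rw [hQ, hQ.map_add_one, hQ.map_sub_one]
  linear_combination (norm := module) -two_evaluations

end IsSquareLeibniz

namespace IsSymmBiadditive

variable {K : Type*} [Field K] {F : Subfield K} {B : F → F → K}

/-- The quadratic map `x ↦ B x x` over `ℤ` attached to a symmetric bi-additive `B`. The base ring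
is `ℤ` because `B` is only additive in each variable. -/
def toQuadraticMap (hB : IsSymmBiadditive F B) : QuadraticMap ℤ F K :=
  LinearMap.BilinMap.toQuadraticMap <| AddMonoidHom.toIntLinearMap <|
    AddMonoidHom.mk' (fun x ↦ (AddMonoidHom.mk' (B x) (hB.2.2 x)).toIntLinearMap)
      fun x y ↦ LinearMap.ext (hB.2.1 x y)

theorem toQuadraticMap_apply (hB : IsSymmBiadditive F B) (x : F) :
    hB.toQuadraticMap x = B x x :=
  rfl

theorem polar_toQuadraticMap (hB : IsSymmBiadditive F B) (x y : F) :
    polar hB.toQuadraticMap x y = 2 * B x y :=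
  calc polar hB.toQuadraticMap x y = B x y + B y x :=
        LinearMap.BilinMap.polar_toQuadraticMap x y
    _ = 2 * B x y := by rw [hB.1 y x, two_mul]

end IsSymmBiadditive

theorem stmt_12_general {R A M : Type*} [CommRing R] [CommRing A] [AddCommGroup M] [Module R A]
    [Module R M] [Module A M] {Q : QuadraticMap R A M} (hQ : IsSquareLeibniz Q) (x : A) :
    polar Q (x ^ 4) 1 - 6 • x ^ 2 • polar Q (x ^ 2) 1 + 8 • x ^ 3 • polar Q x 1 = 0 := by
  have polar_pow_four : polar Q (x ^ 4) 1 =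
      4 • x ^ 2 • polar Q (x ^ 2) 1 - 2 • 2 • x ^ 2 • Q x := by
    rw [← hQ.map_sq, ← hQ.polar_sq_one, ← pow_mul]
  linear_combination (norm := module) polar_pow_four - (2 * x ^ 2) • hQ.polar_sq_one x

theorem stmt_12 {K : Type*} [Field K] [CharZero K] (F : Subfield K)
    (B : F → F → K) (hB : IsSymmBiadditive F B)
    (q : F → K) (hq : ∀ x : F, q x = B x x)
    (heq : ∀ x y : F, x ≠ 0 → y ≠ 0 →
      q (x * y) = q x * (y : K) ^ 2 + (x : K) ^ 2 * q y)
    (a : F → K) (ha : ∀ x : F, a x = B x 1) :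
    ∀ x : F, a (x ^ 4) - 6 * (x : K) ^ 2 * a (x ^ 2) + 8 * (x : K) ^ 3 * a x = 0 := by
  intro x
  have hQ : IsSquareLeibniz hB.toQuadraticMap := .of_ne_zero (map_zero _) fun x y hx hy ↦ by
    simpa [hB.toQuadraticMap_apply, ← hq, Subfield.smul_def, mul_comm] using heq x y hx hy
  have h := stmt_12_general hQ x
  simp only [hB.polar_toQuadraticMap, ← ha, Subfield.smul_def, smul_eq_mul, nsmul_eq_mul,
    Nat.cast_ofNat, SubmonoidClass.coe_pow] at h
  refine mul_left_cancel₀ (two_ne_zero (α := K)) ?_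
  linear_combination h
end

section
/- Let K be a field of characteristic zero and F ⊆ K a subfield, and let q : F → K be a quadratic function. Then q satisfies q(x²) = 2x²·q(x) for all x ∈ F if and only if q satisfies q(xy) = x²q(y) + y²q(x) for all x, y ∈ F. -/
/-!
Let `P` be the polar form of a quadratic `Q` with `Q (x²) = 2 x² Q x`, and let `a x = P(x, 1)`.
Comparing the hypothesis at `x + y` and `x - y` separates it into its parts even and odd in `y`.
At `y = 1` the even part reads `2 Q x = 4 x a x - a (x²)`, so the additive map `a` determines `Q`,
and the odd part then becomes `a (x³) = 3 x a (x²) - 3 x² a x`. The polarization of this cubic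
identity expresses `a (x y z)` through `a` of products of at most two of the factors, which
computes `a (x² y²)`, and hence `Q (x y)`.
-/

open QuadraticMap (polar polar_comm)

section Module

variable {R M : Type*} [CommRing R] [AddCommGroup M] [Module R M]

/-- Derivations of order two: the additive maps that are differential operators of order at most two
and vanish at `1`. The vanishing is the case `x = y = z = 1` of the identity. -/
def IsDerivationOfOrderTwo (a : R →+ M) : Prop :=
  ∀ x y z : R, a (x * y * z) = x • a (y * z) + y • a (x * z) + z • a (x * y)
    - (x * y) • a z - (x * z) • a y - (y * z) • a x

lemma isDerivationOfOrderTwo_of_map_cube {a : R →+ M} (h6 : IsSMulRegular M (6 : R))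
    (h : ∀ x, a (x ^ 3) = (3 * x) • a (x ^ 2) - (3 * x ^ 2) • a x) :
    IsDerivationOfOrderTwo a := by
  intro x y z
  apply h6
  have hxyz := h (x + y + z)
  have hxy := h (x + y)
  have hxz := h (x + z)
  have hyz := h (y + z)
  have hx := h x
  have hy := h y
  have hz := h z
  simp only [pow_three, pow_two, add_mul, mul_add, map_add, mul_comm, mul_left_comm]
    at hxyz hxy hxz hyz hx hy hz ⊢
  linear_combination (norm := module) hxyz - hxy - hxz - hyz + hx + hy + hz

lemma IsDerivationOfOrderTwo.four_mul_smul_sub_map_sq_mul {a : R →+ M}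
    (ha : IsDerivationOfOrderTwo a) (x y : R) :
    (4 * (x * y)) • a (x * y) - a ((x * y) ^ 2) =
      x ^ 2 • ((4 * y) • a y - a (y ^ 2)) + y ^ 2 • ((4 * x) • a x - a (x ^ 2)) := by
  have hxyy := ha x y y
  have hxxyy := ha x x (y ^ 2)
  rw [mul_assoc, ← pow_two] at hxyy
  rw [← pow_two, ← mul_pow] at hxxyy
  linear_combination (norm := module) -hxxyy - (2 * x) • hxyy

variable {Q : QuadraticMap ℤ R M}

lemma quadraticMap_add_sq (x y : R) :
    Q ((x + y) ^ 2) = Q (x ^ 2) + (4 : R) • Q (x * y) + Q (y ^ 2) + polar Q (x ^ 2) (y ^ 2)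
      + (2 : R) • polar Q (x ^ 2 + y ^ 2) (x * y) := by
  have hsq : (x + y) ^ 2 = x ^ 2 + y ^ 2 + (2 : ℤ) • (x * y) := by
    rw [add_sq', mul_assoc, ofNat_zsmul, nsmul_eq_mul, Nat.cast_ofNat]
  rw [hsq, QuadraticMap.map_add Q (_ + _), QuadraticMap.map_add Q, Q.map_smul, Q.polar_smul_right]
  module

lemma map_one_eq_zero_of_map_sq (h : ∀ x, Q (x ^ 2) = (2 * x ^ 2) • Q x) : Q 1 = 0 := by
  simpa [two_smul] using h 1

lemma polar_sq_sq_of_map_sq (h2 : IsSMulRegular M (2 : R))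
    (h : ∀ x, Q (x ^ 2) = (2 * x ^ 2) • Q x) (x y : R) :
    polar Q (x ^ 2) (y ^ 2) = (2 * x ^ 2) • Q y + (2 * y ^ 2) • Q x
      + (4 * (x * y)) • polar Q x y - (4 : R) • Q (x * y) := by
  apply h2
  have hadd := h (x + y)
  have hsub := h (x + -y)
  rw [quadraticMap_add_sq, QuadraticMap.map_add Q] at hadd hsub
  simp only [mul_neg, neg_sq, Q.map_neg, Q.polar_neg_right] at hsub
  linear_combination (norm := module) hadd + hsub - (2 : R) • h x - (2 : R) • h y

lemma polar_sq_add_sq_mul_of_map_sq (h2 : IsSMulRegular M (2 : R))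
    (h : ∀ x, Q (x ^ 2) = (2 * x ^ 2) • Q x) (x y : R) :
    polar Q (x ^ 2 + y ^ 2) (x * y) =
      (x ^ 2 + y ^ 2) • polar Q x y + (2 * (x * y)) • (Q x + Q y) := by
  apply h2
  have hadd := h (x + y)
  rw [quadraticMap_add_sq, QuadraticMap.map_add Q, polar_sq_sq_of_map_sq h2 h] at hadd
  linear_combination (norm := module) hadd - h x - h y

lemma two_smul_apply_of_map_sq (h2 : IsSMulRegular M (2 : R))
    (h : ∀ x, Q (x ^ 2) = (2 * x ^ 2) • Q x) (x : R) :
    (2 : R) • Q x = (4 * x) • polar Q x 1 - polar Q (x ^ 2) 1 := by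
  have heven := polar_sq_sq_of_map_sq h2 h x 1
  simp only [one_pow, mul_one, map_one_eq_zero_of_map_sq h] at heven
  linear_combination (norm := module) heven

lemma polar_eq_of_map_sq (h2 : IsSMulRegular M (2 : R))
    (h : ∀ x, Q (x ^ 2) = (2 * x ^ 2) • Q x) (x y : R) :
    polar Q x y = (2 * x) • polar Q y 1 + (2 * y) • polar Q x 1 - polar Q (x * y) 1 := by
  apply h2
  have hxy := two_smul_apply_of_map_sq h2 h (x + y)
  simp only [add_sq', two_mul, add_mul, QuadraticMap.map_add Q, Q.polar_add_left] at hxy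
  linear_combination (norm := module)
    hxy - two_smul_apply_of_map_sq h2 h x - two_smul_apply_of_map_sq h2 h y

lemma polar_cube_one_of_map_sq (h2 : IsSMulRegular M (2 : R))
    (h : ∀ x, Q (x ^ 2) = (2 * x ^ 2) • Q x) (x : R) :
    polar Q (x ^ 3) 1 = (3 * x) • polar Q (x ^ 2) 1 - (3 * x ^ 2) • polar Q x 1 := by
  have hodd := polar_sq_add_sq_mul_of_map_sq h2 h x 1
  rw [one_pow, mul_one, Q.polar_add_left, polar_comm Q 1 x, map_one_eq_zero_of_map_sq h,
    polar_eq_of_map_sq h2 h (x ^ 2) x, ← pow_succ] at hodd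
  linear_combination (norm := module) -hodd - x • two_smul_apply_of_map_sq h2 h x

theorem stmt_14_general (h6 : IsSMulRegular M (6 : R)) (Q : QuadraticMap ℤ R M) :
    (∀ x, Q (x ^ 2) = (2 * x ^ 2) • Q x) ↔
      ∀ x y, Q (x * y) = x ^ 2 • Q y + y ^ 2 • Q x := by
  refine ⟨fun h x y => ?_, fun h x => by rw [pow_two, h]; module⟩
  have h2 : IsSMulRegular M (2 : R) := .of_mul (a := 3) (by norm_num1; exact h6)
  let a : R →+ M := (Q.polarBilin.flip 1).toAddMonoidHom
  have ha : IsDerivationOfOrderTwo a :=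
    isDerivationOfOrderTwo_of_map_cube h6 (polar_cube_one_of_map_sq h2 h)
  have hQ : ∀ x, (2 : R) • Q x = (4 * x) • a x - a (x ^ 2) := two_smul_apply_of_map_sq h2 h
  apply h2
  linear_combination (norm := module)
    ha.four_mul_smul_sub_map_sq_mul x y + hQ (x * y) - x ^ 2 • hQ y - y ^ 2 • hQ x

end Module

lemma IsQuadratic.exists_quadraticMap {K : Type*} [Field K] {F : Subfield K} {q : F → K}
    (hq : IsQuadratic F q) : ∃ Q : QuadraticMap ℤ F K, ⇑Q = q := by
  obtain ⟨B, ⟨-, hadd_left, hadd_right⟩, hqB⟩ := hq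
  let toLinear (x : F) : F →ₗ[ℤ] K := (AddMonoidHom.mk' (B x) (hadd_right x)).toIntLinearMap
  let bilin : LinearMap.BilinMap ℤ F K :=
    (AddMonoidHom.mk' toLinear fun x y => LinearMap.ext (hadd_left x y)).toIntLinearMap
  exact ⟨bilin.toQuadraticMap, funext fun x => (hqB x).symm⟩

theorem stmt_14 {K : Type*} [Field K] [CharZero K] (F : Subfield K)
    (q : F → K) (hq : IsQuadratic F q) :
    (∀ x : F, q (x ^ 2) = 2 * (x : K) ^ 2 * q x) ↔
      (∀ x y : F, q (x * y) = (x : K) ^ 2 * q y + (y : K) ^ 2 * q x) := by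
  obtain ⟨Q, rfl⟩ := hq.exists_quadraticMap
  exact stmt_14_general (.of_ne_zero (by norm_num)) Q
end
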